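/- Let x ∈ ℝ^n be nonzero, let A ∈ ℝ^{m×n} have i.i.d. standard normal entries with rows a_1ᵀ,…,a_mᵀ, let y_i = |⟨a_i, x⟩| + η_i, and let λ = √(π/2)·(1/m)∑_{i=1}^m y_i. For every c ∈ (0,1) there exist constants c₀ > 0 and c' > 0 such that if the noise satisfies ‖η‖₂/√m ≤ c₀‖x‖₂, then with probability at least 1 − e^{−c' m}: (1 − c)‖x‖₂ < λ < (1 + c)‖x‖₂. -/

import Mathlib

open MeasureTheory ProbabilityTheory Matrix

/-- The squared-sum Euclidean (ℓ₂) norm of a vector in `Fin d → ℝ`. -/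
noncomputable def l2norm {d : ℕ} (v : Fin d → ℝ) : ℝ := Real.sqrt (∑ i, (v i) ^ 2)

/-- `A : Ω → ℝ^{m×n}` (given through its rows) has i.i.d. standard normal entries. -/
def IIDStdGaussian {Ω : Type} [MeasurableSpace Ω] (P : Measure Ω) (m n : ℕ)
    (A : Ω → Fin m → Fin n → ℝ) : Prop :=
  Measure.map A P = Measure.pi fun _ : Fin m => Measure.pi fun _ : Fin n => gaussianReal 0 1

/-- `λ = √(π/2)·(1/m)∑_i y_i` with `y_i = |⟨a_i, x⟩| + η_i`. -/
noncomputable def lamb {m n : ℕ} (a : Fin m → Fin n → ℝ) (x : Fin n → ℝ)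
    (η : Fin m → ℝ) : ℝ :=
  Real.sqrt (Real.pi / 2) * ((1 / (m : ℝ)) * ∑ i, (|a i ⬝ᵥ x| + η i))

/-!
The numbers `g_i = ⟨a_i, x⟩ / ‖x‖₂` are i.i.d. standard normal and `𝔼|g_i| = √(2/π)`, so
`(λ - ‖x‖₂) / √(π/2)` is `‖x‖₂` times the deviation of the empirical mean of the `|g_i|` from
`√(2/π)`, plus the mean of the noise, which Cauchy-Schwarz bounds by `‖η‖₂ / √m`.

The Chernoff bound makes a fixed deviation of that empirical mean improbable: its probability is at
most `2 e^{-κm}`. To remove the factor `2`, decrease `κ`. This is harmless for large `m`, and for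
each of the finitely many remaining `m ≥ 1` the probability is less than `1`, because the normal
law charges every nonempty open set.
-/

open Filter Topology Asymptotics

theorem one_sub_measureReal_le_of_compl_subset {Ω : Type*} [MeasurableSpace Ω] {P : Measure Ω}
    [IsProbabilityMeasure P] {s t : Set Ω} (h : sᶜ ⊆ t) : 1 - P.real t ≤ P.real s := by
  have hst : s ∪ t = Set.univ := Set.eq_univ_of_univ_subset
    ((Set.union_compl_self s).symm.subset.trans (Set.union_subset_union_right s h))
  have hunion : 1 ≤ P.real s + P.real t := by
    simpa [hst] using measureReal_union_le (μ := P) s t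
  linarith

section Deviation

variable {E : Type*} [MeasurableSpace E] {μ : Measure E} {Z : E → ℝ} {t δ : ℝ}

theorem exists_pos_cgf_lt_mul [IsProbabilityMeasure μ]
    (hZ : 0 ∈ interior (integrableExpSet Z μ)) (ht : μ[Z] < t) :
    ∃ s, 0 < s ∧ s ∈ integrableExpSet Z μ ∧ cgf Z μ s < s * t := by
  have hderiv : HasDerivAt (cgf Z μ) μ[Z] 0 := by
    simpa [deriv_cgf_zero hZ] using (analyticAt_cgf hZ).differentiableAt.hasDerivAt
  have hslope : ∀ᶠ s in 𝓝[>] (0 : ℝ), slope (cgf Z μ) 0 s < t :=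
    ((hasDerivAt_iff_tendsto_slope.1 hderiv).mono_left
      (nhdsWithin_mono _ fun _ hs => ne_of_gt hs)).eventually_lt_const ht
  have hmem : ∀ᶠ s in 𝓝[>] (0 : ℝ), s ∈ interior (integrableExpSet Z μ) :=
    nhdsWithin_le_nhds (isOpen_interior.mem_nhds hZ)
  obtain ⟨s, hst, hs, hs0⟩ := (hslope.and (hmem.and self_mem_nhdsWithin)).exists
  have hs0 : 0 < s := hs0
  refine ⟨s, hs0, interior_subset hs, ?_⟩
  rwa [slope_def_field, cgf_zero, sub_zero, sub_zero, div_lt_iff₀' hs0] at hst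

theorem measureReal_pi_le_sum_le_exp_cgf {ι : Type*} [Fintype ι] [IsProbabilityMeasure μ]
    (hZ : Measurable Z) {s : ℝ} (hs : 0 ≤ s) (hint : s ∈ integrableExpSet Z μ) (ε : ℝ) :
    (Measure.pi fun _ : ι => μ).real {v | ε ≤ ∑ i, Z (v i)} ≤
      Real.exp (-s * ε + Fintype.card ι * cgf Z μ s) := by
  have hindep : iIndepFun (fun (i : ι) (v : ι → E) => Z (v i)) (Measure.pi fun _ => μ) :=
    iIndepFun_pi fun _ => hZ.aemeasurable
  have hident (i : ι) : IdentDistrib (fun v : ι → E => Z (v i)) Z (Measure.pi fun _ => μ) μ :=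
    ((measurePreserving_eval (fun _ => μ) i).hasLaw.identDistrib .id).comp hZ
  have hint' (i : ι) : Integrable (fun v : ι → E => Real.exp (s * Z (v i)))
      (Measure.pi fun _ => μ) :=
    ((hident i).comp (measurable_const_mul s).exp).integrable_iff.2 hint
  have hcgf : cgf (∑ i : ι, fun v : ι → E => Z (v i)) (Measure.pi fun _ => μ) s =
      Fintype.card ι * cgf Z μ s := by
    rw [hindep.cgf_sum (by fun_prop) fun i _ => hint' i]
    simp [cgf, mgf_congr_identDistrib (hident _)]
  simpa [hcgf] using measure_ge_le_exp_cgf ε hs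
    (hindep.integrable_exp_mul_sum (s := .univ) (by fun_prop) fun i _ => hint' i)

theorem exists_forall_measureReal_pi_mul_le_sum_le_exp [IsProbabilityMeasure μ]
    (hZm : Measurable Z) (hZ : 0 ∈ interior (integrableExpSet Z μ)) (ht : μ[Z] < t) :
    ∃ κ > 0, ∀ m : ℕ, (Measure.pi fun _ : Fin m => μ).real {v | m * t ≤ ∑ i, Z (v i)} ≤
      Real.exp (-κ * m) := by
  obtain ⟨s, hs0, hs, hst⟩ := exists_pos_cgf_lt_mul hZ ht
  refine ⟨s * t - cgf Z μ s, sub_pos.2 hst, fun m => ?_⟩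
  refine (measureReal_pi_le_sum_le_exp_cgf hZm hs0.le hs _).trans_eq ?_
  rw [Fintype.card_fin]
  ring_nf

theorem exists_forall_measureReal_pi_abs_sum_sub_le_two_mul_exp [IsProbabilityMeasure μ]
    (hZm : Measurable Z) (hZ : 0 ∈ interior (integrableExpSet Z μ)) (hδ : 0 < δ) :
    ∃ κ > 0, ∀ m : ℕ, (Measure.pi fun _ : Fin m => μ).real
      {v | δ * m ≤ |∑ i, Z (v i) - m * μ[Z]|} ≤ 2 * Real.exp (-κ * m) := by
  have hneg : 0 ∈ interior (integrableExpSet (-Z) μ) := by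
    rw [mem_interior_iff_mem_nhds] at hZ ⊢
    have : integrableExpSet (-Z) μ = (-·) ⁻¹' integrableExpSet Z μ := by
      ext; simp [integrableExpSet]
    rw [this]
    exact continuous_neg.continuousAt.preimage_mem_nhds (by simpa using hZ)
  obtain ⟨κ₁, hκ₁, hupper⟩ := exists_forall_measureReal_pi_mul_le_sum_le_exp hZm hZ
    (t := μ[Z] + δ) (by linarith)
  obtain ⟨κ₂, hκ₂, hlower⟩ := exists_forall_measureReal_pi_mul_le_sum_le_exp hZm.neg hneg
    (t := -μ[Z] + δ) (by simpa [integral_neg] using hδ)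
  refine ⟨min κ₁ κ₂, lt_min hκ₁ hκ₂, fun m => ?_⟩
  have hsub : {v : Fin m → E | δ * m ≤ |∑ i, Z (v i) - m * μ[Z]|} ⊆
      {v | m * (μ[Z] + δ) ≤ ∑ i, Z (v i)} ∪ {v | m * (-μ[Z] + δ) ≤ ∑ i, (-Z) (v i)} := by
    intro v hv
    simp only [Set.mem_union, Set.mem_ofPred_eq, Pi.neg_apply, Finset.sum_neg_distrib] at hv ⊢
    exact (le_abs.1 hv).imp (fun h => by linarith) fun h => by linarith
  calc _ ≤ _ := measureReal_mono hsub
    _ ≤ _ := measureReal_union_le _ _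
    _ ≤ Real.exp (-κ₁ * m) + Real.exp (-κ₂ * m) := add_le_add (hupper m) (hlower m)
    _ ≤ Real.exp (-min κ₁ κ₂ * m) + Real.exp (-min κ₁ κ₂ * m) := by
      gcongr
      exacts [min_le_left _ _, min_le_right _ _]
    _ = _ := (two_mul _).symm

theorem exists_forall_le_exp_neg_mul_of_isBigO {p : ℕ → ℝ} {κ : ℝ} (hκ : 0 < κ)
    (hp : p =O[atTop] fun m : ℕ => Real.exp (-κ * m)) (h_zero : p 0 ≤ 1)
    (h_lt : ∀ m ≠ 0, p m < 1) : ∃ κ' > 0, ∀ m : ℕ, p m ≤ Real.exp (-κ' * m) := by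
  have hlittle : p =o[atTop] fun m : ℕ => Real.exp (-(κ / 2) * m) := by
    refine hp.trans_isLittleO (Real.isLittleO_exp_comp_exp_comp.2 ?_)
    convert! tendsto_natCast_atTop_atTop.const_mul_atTop (half_pos hκ) using 2
    ring
  obtain ⟨M, hM⟩ := eventually_atTop.1 (hlittle.bound one_pos)
  have hsmall (m : ℕ) : ∀ᶠ κ' in 𝓝[>] (0 : ℝ), p m ≤ Real.exp (-κ' * m) := by
    rcases eq_or_ne m 0 with rfl | hm
    · simp [h_zero]
    · have hcont : Tendsto (fun κ' : ℝ => Real.exp (-κ' * m)) (𝓝 0) (𝓝 1) :=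
        Continuous.tendsto' (by fun_prop) _ _ (by simp)
      exact ((hcont.mono_left nhdsWithin_le_nhds).eventually_const_lt (h_lt m hm)).mono
        fun _ => le_of_lt
  have hall : ∀ᶠ κ' in 𝓝[>] (0 : ℝ), ∀ m < M, p m ≤ Real.exp (-κ' * m) :=
    (Set.finite_lt_nat M).eventually_all.2 fun m _ => hsmall m
  have hhalf : ∀ᶠ κ' in 𝓝[>] (0 : ℝ), κ' < κ / 2 :=
    nhdsWithin_le_nhds (eventually_lt_nhds (half_pos hκ))
  obtain ⟨κ', hlt, hle, hpos⟩ := (hall.and (hhalf.and self_mem_nhdsWithin)).exists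
  refine ⟨κ', hpos, fun m => (lt_or_ge m M).elim (hlt m) fun hm => ?_⟩
  calc p m ≤ ‖p m‖ := Real.le_norm_self _
    _ ≤ Real.exp (-(κ / 2) * m) := by simpa using hM m hm
    _ ≤ Real.exp (-κ' * m) := by gcongr

theorem measureReal_pi_abs_sum_sub_lt_one [TopologicalSpace E] [PreconnectedSpace E]
    [OpensMeasurableSpace E] [IsProbabilityMeasure μ] [μ.IsOpenPosMeasure]
    (hZ : Continuous Z) (hint : Integrable Z μ) (hδ : 0 < δ) {m : ℕ} (hm : m ≠ 0) :
    (Measure.pi fun _ : Fin m => μ).real {v | δ * m ≤ |∑ i, Z (v i) - m * μ[Z]|} < 1 := by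
  have hZm : Measurable Z := hZ.measurable
  have hmeas : MeasurableSet {v : Fin m → E | δ * m ≤ |∑ i, Z (v i) - m * μ[Z]|} :=
    measurableSet_le (by fun_prop) (by fun_prop)
  -- Since `Z` attains its mean, some constant vector has zero deviation.
  obtain ⟨e, he⟩ : μ[Z] ∈ Set.range Z :=
    mem_range_of_exists_le_of_exists_ge hZ (exists_le_integral hint) (exists_integral_le hint)
  have hopen : IsOpen {v : Fin m → E | δ * m ≤ |∑ i, Z (v i) - m * μ[Z]|}ᶜ :=
    (isClosed_le (by fun_prop) (by fun_prop)).isOpen_compl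
  have hne : {v : Fin m → E | δ * m ≤ |∑ i, Z (v i) - m * μ[Z]|}ᶜ.Nonempty :=
    ⟨fun _ => e, by simpa [he] using mul_pos hδ (Nat.cast_pos.2 (Nat.pos_of_ne_zero hm))⟩
  have hpos := ENNReal.toReal_pos (hopen.measure_pos (Measure.pi fun _ : Fin m => μ) hne).ne'
    (measure_ne_top _ _)
  rw [← measureReal_def, probReal_compl_eq_one_sub hmeas] at hpos
  linarith

theorem exists_forall_measureReal_pi_abs_sum_sub_le_exp [TopologicalSpace E] [PreconnectedSpace E]
    [OpensMeasurableSpace E] [IsProbabilityMeasure μ] [μ.IsOpenPosMeasure]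
    (hZ : Continuous Z) (hexp : 0 ∈ interior (integrableExpSet Z μ)) (hδ : 0 < δ) :
    ∃ κ > 0, ∀ m : ℕ, (Measure.pi fun _ : Fin m => μ).real
      {v | δ * m ≤ |∑ i, Z (v i) - m * μ[Z]|} ≤ Real.exp (-κ * m) := by
  obtain ⟨κ, hκ, h⟩ :=
    exists_forall_measureReal_pi_abs_sum_sub_le_two_mul_exp hZ.measurable hexp hδ
  refine exists_forall_le_exp_neg_mul_of_isBigO hκ (.of_bound 2 (.of_forall fun m => ?_))
    measureReal_le_one fun m hm => measureReal_pi_abs_sum_sub_lt_one hZ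
      (integrable_of_mem_interior_integrableExpSet hexp) hδ hm
  simpa [abs_of_nonneg] using h m

end Deviation

section Gaussian

open scoped NNReal

theorem isOpenPosMeasure_gaussianReal (a : ℝ) {v : ℝ≥0} (hv : v ≠ 0) :
    (gaussianReal a v).IsOpenPosMeasure :=
  (gaussianReal_absolutelyContinuous' a hv).isOpenPosMeasure

theorem integrableExpSet_abs_gaussianReal (a : ℝ) (v : ℝ≥0) :
    integrableExpSet (fun g : ℝ => |g|) (gaussianReal a v) = Set.univ :=
  Set.eq_univ_of_forall fun t => integrable_exp_mul_abs (integrable_exp_mul_gaussianReal t)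
    (integrable_exp_mul_gaussianReal (-t))

theorem integral_abs_gaussianReal (v : ℝ≥0) :
    ∫ g, |g| ∂gaussianReal 0 v = √(2 * v / Real.pi) := by
  rcases eq_or_ne v 0 with rfl | hv
  · simp
  have hpdf (g : ℝ) : gaussianPDFReal 0 v g • |g| = (√(2 * Real.pi * v))⁻¹ *
      (|g| ^ (1 : ℝ) * Real.exp (-(2 * v : ℝ)⁻¹ * |g| ^ (2 : ℝ))) := by
    simp only [gaussianPDFReal, sub_zero, smul_eq_mul, Real.rpow_one, Real.rpow_two, sq_abs]
    ring_nf
  rw [integral_gaussianReal_eq_integral_smul hv, integral_congr_ae (.of_forall hpdf),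
    integral_const_mul,
    integral_comp_abs (f := fun z : ℝ => z ^ (1 : ℝ) * Real.exp (-(2 * v : ℝ)⁻¹ * z ^ (2 : ℝ))),
    integral_rpow_mul_exp_neg_mul_rpow two_pos (by norm_num) (by positivity)]
  have hrpow : ((2 * v : ℝ)⁻¹) ^ (-(1 + 1) / 2 : ℝ) = 2 * v := by
    rw [show (-(1 + 1) / 2 : ℝ) = -1 by norm_num, Real.rpow_neg_one, inv_inv]
  have hsqrt : √(2 * v / Real.pi) = 2 * v / √(2 * Real.pi * v) := by
    rw [show 2 * v / Real.pi = (2 * v) ^ 2 / (2 * Real.pi * v) by field_simp,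
      Real.sqrt_div (sq_nonneg _), Real.sqrt_sq (by positivity)]
  have hGamma : Real.Gamma ((1 + 1) / 2) = 1 := by
    rw [add_self_div_two, Real.Gamma_one]
  rw [hrpow, hsqrt, hGamma]
  ring

theorem hasLaw_sum_gaussianReal {Ω ι : Type*} [MeasurableSpace Ω] [Fintype ι] {P : Measure Ω}
    {X : ι → Ω → ℝ} {a : ι → ℝ} {v : ι → ℝ≥0} (hX : ∀ i, HasLaw (X i) (gaussianReal (a i) (v i)) P)
    (hindep : iIndepFun X P) :
    HasLaw (∑ i, X i) (gaussianReal (∑ i, a i) (∑ i, v i)) P where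
  aemeasurable := Finset.aemeasurable_sum _ fun i _ => (hX i).aemeasurable
  map_eq := by
    have := hindep.isProbabilityMeasure
    refine Measure.ext_of_charFun ?_
    rw [hindep.charFun_map_sum_eq_prod fun i => (hX i).aemeasurable]
    ext t
    simp [(hX _).map_eq, charFun_gaussianReal, ← Complex.exp_sum, Finset.mul_sum,
      Finset.sum_mul, Finset.sum_div]

theorem measurePreserving_dotProduct_gaussianReal {ι : Type*} [Fintype ι] (u : ι → ℝ) :
    MeasurePreserving (· ⬝ᵥ u) (Measure.pi fun _ => gaussianReal 0 1)
      (gaussianReal 0 (‖WithLp.toLp 2 u‖₊ ^ 2)) := by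
  have hterm (j : ι) : HasLaw (fun a : ι → ℝ => a j * u j) (gaussianReal 0 (‖u j‖₊ ^ 2))
      (Measure.pi fun _ => gaussianReal 0 1) := by
    have h := gaussianReal_mul_const (measurePreserving_eval (fun _ => gaussianReal 0 1) j).hasLaw
      (u j)
    convert! h using 2
    · simp
    · ext; simp
  have hindep : iIndepFun (fun j (a : ι → ℝ) => a j * u j)
      (Measure.pi fun _ => gaussianReal 0 1) :=
    iIndepFun_pi (X := fun j g => g * u j) fun j => by fun_prop
  have h := (hasLaw_sum_gaussianReal hterm hindep).measurePreserving (by fun_prop)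
  convert! h using 2
  · simp [dotProduct]
  · simp
  · ext; simp [EuclideanSpace.norm_sq_eq]

theorem exists_forall_measureReal_pi_gaussianReal_abs_le_exp {δ : ℝ} (hδ : 0 < δ) :
    ∃ κ > 0, ∀ m : ℕ, (Measure.pi fun _ : Fin m => gaussianReal 0 1).real
      {v | δ * m ≤ |∑ i, |v i| - m * √(2 / Real.pi)|} ≤ Real.exp (-κ * m) := by
  have := isOpenPosMeasure_gaussianReal 0 one_ne_zero
  simpa [integral_abs_gaussianReal] using exists_forall_measureReal_pi_abs_sum_sub_le_exp
    (μ := gaussianReal 0 1) continuous_abs (by simp [integrableExpSet_abs_gaussianReal]) hδ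

end Gaussian

section Estimator

variable {m n : ℕ} {a : Fin m → Fin n → ℝ} {x : Fin n → ℝ} {η : Fin m → ℝ} {δ ε : ℝ}

theorem l2norm_eq_norm {d : ℕ} (v : Fin d → ℝ) : l2norm v = ‖WithLp.toLp 2 v‖ := by
  simp [EuclideanSpace.norm_eq, l2norm]

theorem l2norm_pos (hx : x ≠ 0) : 0 < l2norm x := by
  simpa [l2norm_eq_norm] using hx

theorem abs_sum_div_le_l2norm_div_sqrt (η : Fin m → ℝ) :
    |(∑ i, η i) / m| ≤ l2norm η / √m := by
  have hcs : |∑ i, η i| ≤ √m * l2norm η := by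
    rw [l2norm, ← Real.sqrt_mul (Nat.cast_nonneg m)]
    exact Real.abs_le_sqrt (by simpa using sq_sum_le_card_mul_sum_sq (s := .univ) (f := η))
  calc |(∑ i, η i) / m| = |∑ i, η i| / m := by rw [abs_div, Nat.abs_cast]
    _ ≤ √m * l2norm η / m := by gcongr
    _ = l2norm η / √m := by
      rw [mul_comm, mul_div_assoc, Real.sqrt_div_self', mul_one_div]

theorem sum_abs_dotProduct_eq_l2norm_mul (hx : x ≠ 0) :
    ∑ i, |a i ⬝ᵥ x| = l2norm x * ∑ i, |a i ⬝ᵥ ((l2norm x)⁻¹ • x)| := by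
  have := l2norm_pos hx
  simp only [dotProduct_smul, smul_eq_mul, abs_mul, abs_inv, abs_of_pos this, ← Finset.mul_sum]
  field_simp

theorem sqrt_pi_div_two_mul_sqrt_two_div_pi : √(Real.pi / 2) * √(2 / Real.pi) = 1 := by
  rw [← Real.sqrt_mul (by positivity), div_mul_div_cancel₀ two_ne_zero, div_self Real.pi_ne_zero,
    Real.sqrt_one]

theorem abs_lamb_sub_l2norm_lt (hx : x ≠ 0)
    (hdev : |∑ i, |a i ⬝ᵥ ((l2norm x)⁻¹ • x)| - m * √(2 / Real.pi)| < δ * m)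
    (hη : l2norm η / √m ≤ ε * l2norm x) :
    |lamb a x η - l2norm x| < √(Real.pi / 2) * (δ + ε) * l2norm x := by
  have hL := l2norm_pos hx
  have hm : (0 : ℝ) < m := (Nat.cast_nonneg m).lt_of_ne'
    (right_ne_zero_of_mul ((abs_nonneg _).trans_lt hdev).ne')
  set S := ∑ i, |a i ⬝ᵥ ((l2norm x)⁻¹ • x)|
  have hdecomp : lamb a x η - l2norm x =
      √(Real.pi / 2) * (l2norm x * ((S - m * √(2 / Real.pi)) / m) + (∑ i, η i) / m) := by
    rw [lamb, Finset.sum_add_distrib, sum_abs_dotProduct_eq_l2norm_mul hx,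
      show ∑ i, |a i ⬝ᵥ ((l2norm x)⁻¹ • x)| = S from rfl]
    field_simp
    linear_combination m * l2norm x * sqrt_pi_div_two_mul_sqrt_two_div_pi
  have hsignal : |l2norm x * ((S - m * √(2 / Real.pi)) / m)| < l2norm x * δ := by
    rw [abs_mul, abs_of_pos hL, abs_div, Nat.abs_cast]
    gcongr
    rwa [div_lt_iff₀ hm]
  have hnoise : |(∑ i, η i) / m| ≤ ε * l2norm x := (abs_sum_div_le_l2norm_div_sqrt η).trans hη
  calc |lamb a x η - l2norm x|
      ≤ √(Real.pi / 2) * (|l2norm x * ((S - m * √(2 / Real.pi)) / m)| + |(∑ i, η i) / m|) := by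
        rw [hdecomp, abs_mul, abs_of_nonneg (Real.sqrt_nonneg _)]
        gcongr
        exact abs_add_le _ _
    _ < √(Real.pi / 2) * (l2norm x * δ + ε * l2norm x) := by
        gcongr ?_ * ?_
        exact add_lt_add_of_lt_of_le hsignal hnoise
    _ = √(Real.pi / 2) * (δ + ε) * l2norm x := by ring

theorem measurePreserving_dotProduct_normalize (hx : x ≠ 0) :
    MeasurePreserving (fun (a : Fin m → Fin n → ℝ) i => a i ⬝ᵥ ((l2norm x)⁻¹ • x))
      (Measure.pi fun _ => Measure.pi fun _ => gaussianReal 0 1)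
      (Measure.pi fun _ => gaussianReal 0 1) := by
  have hunit : ‖WithLp.toLp 2 ((l2norm x)⁻¹ • x)‖₊ = 1 := by
    rw [← NNReal.coe_inj, coe_nnnorm, WithLp.toLp_smul, l2norm_eq_norm]
    exact norm_smul_inv_norm (𝕜 := ℝ) (by simpa using hx)
  have hrow := measurePreserving_dotProduct_gaussianReal ((l2norm x)⁻¹ • x)
  rw [hunit, one_pow] at hrow
  exact measurePreserving_pi _ _ fun _ => hrow

end Estimator

theorem stmt_6_general (c : ℝ) (hc : 0 < c) :
    ∃ c₀ c' : ℝ, 0 < c₀ ∧ 0 < c' ∧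
      ∀ (m n : ℕ) (x : Fin n → ℝ), x ≠ 0 →
      ∀ η : Fin m → ℝ, l2norm η / √m ≤ c₀ * l2norm x →
      ∀ (Ω : Type*) [MeasurableSpace Ω] (P : Measure Ω) (A : Ω → Fin m → Fin n → ℝ),
        HasLaw A (Measure.pi fun _ => Measure.pi fun _ => gaussianReal 0 1) P →
        P {ω | (1 - c) * l2norm x < lamb (A ω) x η ∧
               lamb (A ω) x η < (1 + c) * l2norm x} ≥
          ENNReal.ofReal (1 - Real.exp (-c' * m)) := by
  obtain ⟨δ, hδ, hδc⟩ : ∃ δ > 0, √(Real.pi / 2) * (δ + δ) = c :=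
    ⟨c / 2 * √(2 / Real.pi), by positivity,
      by linear_combination c * sqrt_pi_div_two_mul_sqrt_two_div_pi⟩
  obtain ⟨κ, hκ, hconc⟩ := exists_forall_measureReal_pi_gaussianReal_abs_le_exp hδ
  refine ⟨δ, κ, hδ, hκ, fun m n x hx η hη Ω _ P A hA => ?_⟩
  have hlaw := (measurePreserving_dotProduct_normalize hx).hasLaw.comp hA
  have := hlaw.isProbabilityMeasure
  have hbad : P.real {ω | δ * m ≤ |∑ i, |A ω i ⬝ᵥ ((l2norm x)⁻¹ • x)| - m * √(2 / Real.pi)|} ≤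
      Real.exp (-κ * m) :=
    (hlaw.measureReal_eq (measurableSet_le (by fun_prop) (by fun_prop))).trans_le (hconc m)
  rw [ge_iff_le, ENNReal.ofReal_le_iff_le_toReal (measure_ne_top _ _)]
  refine (sub_le_sub_left hbad 1).trans (one_sub_measureReal_le_of_compl_subset ?_)
  rw [Set.compl_subset_comm]
  intro ω hω
  have h := abs_lt.1 (hδc ▸ abs_lamb_sub_l2norm_lt hx (not_le.1 hω) hη)
  exact ⟨by linarith, by linarith⟩

/-- For nonzero `x ∈ ℝ^n`, a random matrix `A` with i.i.d. `N(0,1)` entries,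
`y_i = |⟨a_i,x⟩| + η_i` and `λ = √(π/2)·(1/m)∑ y_i`: for every `c ∈ (0,1)` there are
constants `c₀, c' > 0` such that if `‖η‖₂/√m ≤ c₀‖x‖₂`, then with probability at
least `1 − e^{−c' m}` one has `(1−c)‖x‖₂ < λ < (1+c)‖x‖₂`. -/
theorem stmt_6 (c : ℝ) (hc0 : 0 < c) (hc1 : c < 1) :
    ∃ c₀ c' : ℝ, 0 < c₀ ∧ 0 < c' ∧
      ∀ (m n : ℕ) (x : Fin n → ℝ), x ≠ 0 →
      ∀ η : Fin m → ℝ, l2norm η / Real.sqrt m ≤ c₀ * l2norm x →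
      ∀ (Ω : Type) [MeasurableSpace Ω] (P : Measure Ω) [IsProbabilityMeasure P]
        (A : Ω → Fin m → Fin n → ℝ), Measurable A → IIDStdGaussian P m n A →
        P {ω | (1 - c) * l2norm x < lamb (A ω) x η ∧
               lamb (A ω) x η < (1 + c) * l2norm x} ≥
          ENNReal.ofReal (1 - Real.exp (-c' * m)) := by
  obtain ⟨c₀, c', hc₀, hc', h⟩ := stmt_6_general c hc0
  exact ⟨c₀, c', hc₀, hc', fun m n x hx η hη Ω _ P _ A hA hlaw =>
    h m n x hx η hη Ω P A ⟨hA.aemeasurable, hlaw⟩⟩
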